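/- There exists θ in C^∞(T^2; R) such that Δθ = 0 on T^2 \ B(x_0, r_0) and |∇θ(x)| > 0 for all x in T^2 \ B(x_0, r_0). Moreover, since ∇θ is nonvanishing on T^2 \ B(x_0,r_0), its winding number (index) along the circle S(x_0, r_0) equals 0, and hence ∇θ restricted to T^2 \ B(x_0,r_0) extends to a smooth nonvanishing vector field on all of T^2. -/

import Mathlib

/-!
Let `℘` be the Weierstrass function of the lattice `ℤ + ℤi`. For all constants `c` and `l ≠ 0` the
function `f = l * exp (c * ℘)` is holomorphic, nonvanishing and doubly periodic off the lattice, so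
if `T = re ∫ f dz` is single-valued on the punctured torus then it is harmonic there and its
gradient `conj f` has no zero. The residue of `f` at `0` vanishes by periodicity, so only the
integrals `A c` and `B c` of `exp (c * ℘)` with respect to arc length over a horizontal and a
vertical segment of length `1` matter: one needs `re (l * A c) = 0` and `re (l * B c * I) = 0`.
Such an `l` exists as soon as `A c / B c` is purely imaginary or `B c = 0`. If this failed for every
`c`, then `A / B` would be an entire function whose real part has no zero, hence constant by
Liouville's theorem, equal to its value `1` at `c = 0`. Differentiating `A = B` at `0` equates the
integrals of `℘`, which contradicts Legendre's relation.

With a cutoff `χ` that vanishes near the lattice, `θ = χ * T` is smooth. Its gradient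
extends without zeros because the exponent can be cut off instead: `conj (l * exp (c * χ * ℘))`.
-/

/-- Euclidean norm of a planar vector. -/
noncomputable def nrm2 (v : ℝ × ℝ) : ℝ := Real.sqrt (v.1 ^ 2 + v.2 ^ 2)

/-- Gradient of a function of two real variables. -/
noncomputable def grad2 (θ : ℝ × ℝ → ℝ) (x : ℝ × ℝ) : ℝ × ℝ :=
  (deriv (fun u => θ (u, x.2)) x.1, deriv (fun u => θ (x.1, u)) x.2)

/-- Laplacian of a function of two real variables. -/
noncomputable def lap2 (θ : ℝ × ℝ → ℝ) (x : ℝ × ℝ) : ℝ :=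
  deriv (fun u => deriv (fun u' => θ (u', x.2)) u) x.1
    + deriv (fun u => deriv (fun u' => θ (x.1, u')) u) x.2

/-- `x` lies outside the ball `B(x₀, r₀)` of the torus (all `ℤ²`-translates are far). -/
noncomputable def outsideBall (x₀ : ℝ × ℝ) (r₀ : ℝ) (x : ℝ × ℝ) : Prop :=
  ∀ k l : ℤ, r₀ ≤ nrm2 (x.1 - x₀.1 - k, x.2 - x₀.2 - l)

open Complex Filter MeasureTheory Set Topology
open scoped ComplexConjugate ContDiff

section VanishingPeriod

theorem apply_eq_apply_of_re_pos {g : ℂ → ℂ} (hg : Differentiable ℂ g)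
    (hre : ∀ c, 0 < (g c).re) (c c' : ℂ) : g c = g c' := by
  have hne (c : ℂ) : 1 + g c ≠ 0 := fun h ↦ by
    have := congrArg re h
    simp only [add_re, one_re, zero_re] at this
    linarith [hre c]
  have hbounded : Bornology.IsBounded (range fun c ↦ (1 + g c)⁻¹) := by
    refine isBounded_iff_forall_norm_le.2 ⟨1, forall_mem_range.2 fun c ↦ ?_⟩
    rw [norm_inv]
    refine inv_le_one_of_one_le₀ ((?_ : (1 : ℝ) ≤ (1 + g c).re).trans (re_le_norm _))
    simpa using (hre c).le
  have hdiff : Differentiable ℂ fun c ↦ (1 + g c)⁻¹ := (hg.const_add 1).inv hne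
  simpa using hdiff.apply_eq_apply_of_bounded hbounded c c'

theorem apply_eq_apply_of_re_ne_zero {g : ℂ → ℂ} (hg : Differentiable ℂ g)
    (hre : ∀ c, (g c).re ≠ 0) (c c' : ℂ) : g c = g c' := by
  have hcont : Continuous fun c ↦ (g c).re := continuous_re.comp hg.continuous
  have hsign : (∀ c, 0 < (g c).re) ∨ ∀ c, (g c).re < 0 := by
    by_contra! h
    obtain ⟨⟨a, ha⟩, b, hb⟩ := h
    obtain ⟨z, hz⟩ := mem_range_of_exists_le_of_exists_ge hcont ⟨a, ha⟩ ⟨b, hb⟩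
    exact hre z hz
  rcases hsign with hpos | hneg
  · exact apply_eq_apply_of_re_pos hg hpos c c'
  · exact neg_injective (apply_eq_apply_of_re_pos hg.neg (by simpa using hneg) c c')

theorem hasDerivAt_integral_exp_mul {u : ℝ → ℂ} (hu : Continuous u) (a b : ℝ) (c : ℂ) :
    HasDerivAt (fun c ↦ ∫ t in a..b, exp (c * u t)) (∫ t in a..b, u t * exp (c * u t)) c := by
  have hmeas {g : ℝ → ℂ} (hg : Continuous g) :
      AEStronglyMeasurable g (volume.restrict (uIoc a b)) := hg.aestronglyMeasurable
  have hbound : Continuous fun t ↦ ‖u t‖ * Real.exp ((‖c‖ + 1) * ‖u t‖) := by fun_prop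
  refine (intervalIntegral.hasDerivAt_integral_of_dominated_loc_of_deriv_le
    (F' := fun c t ↦ u t * exp (c * u t)) (Metric.ball_mem_nhds c one_pos)
    (.of_forall fun _ ↦ hmeas (by fun_prop))
    ((by fun_prop : Continuous fun t ↦ exp (c * u t)).intervalIntegrable a b)
    (hmeas (by fun_prop)) (.of_forall fun t _ c' hc' ↦ ?_)
    (hbound.intervalIntegrable a b) (.of_forall fun t _ c' _ ↦ ?_)).2
  · rw [norm_mul]
    gcongr
    refine (norm_exp_le_exp_norm _).trans (Real.exp_le_exp.2 ?_)
    rw [norm_mul]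
    gcongr
    linarith [norm_le_norm_add_norm_sub' c' c, mem_ball_iff_norm.1 hc']
  · simpa only [id, one_mul, mul_comm (u t)] using ((hasDerivAt_id' c').mul_const (u t)).cexp

theorem exists_re_integral_exp_mul_conj_eq_zero {u w : ℝ → ℂ} (hu : Continuous u)
    (hw : Continuous w) {a b : ℝ} (hne : ∫ t in a..b, u t ≠ ∫ t in a..b, w t) :
    ∃ c : ℂ, ((∫ t in a..b, exp (c * u t)) * conj (∫ t in a..b, exp (c * w t))).re = 0 := by
  by_contra! h
  set A : ℂ → ℂ := fun c ↦ ∫ t in a..b, exp (c * u t)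
  set B : ℂ → ℂ := fun c ↦ ∫ t in a..b, exp (c * w t)
  have hA (c : ℂ) : HasDerivAt A (∫ t in a..b, u t * exp (c * u t)) c :=
    hasDerivAt_integral_exp_mul hu a b c
  have hB (c : ℂ) : HasDerivAt B (∫ t in a..b, w t * exp (c * w t)) c :=
    hasDerivAt_integral_exp_mul hw a b c
  have hB_ne (c : ℂ) : B c ≠ 0 := fun hc ↦ h c (by simp [B, hc])
  have hquot_re (c : ℂ) : (A c / B c).re ≠ 0 := by
    rw [div_eq_mul_inv, inv_def, ← mul_assoc, re_mul_ofReal]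
    exact mul_ne_zero (h c) (inv_ne_zero (normSq_pos.2 (hB_ne c)).ne')
  have hquot : Differentiable ℂ fun c ↦ A c / B c := fun c ↦
    (hA c).differentiableAt.div (hB c).differentiableAt (hB_ne c)
  have hA_eq_B : A = B := by
    funext c
    have hconst : A c / B c = A 0 / B 0 := apply_eq_apply_of_re_ne_zero hquot hquot_re c 0
    have hzero : A 0 = B 0 := by simp [A, B]
    rwa [hzero, div_self (hB_ne 0), div_eq_one_iff_eq (hB_ne c)] at hconst
  have hderiv_eq := (hA 0).unique (hA_eq_B ▸ hB 0)
  simp only [zero_mul, exp_zero, mul_one] at hderiv_eq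
  exact hne hderiv_eq

theorem exists_ne_zero_re_mul_eq_zero_im_mul_eq_zero {A B : ℂ} (h : (A * conj B).re = 0) :
    ∃ l : ℂ, l ≠ 0 ∧ (l * A).re = 0 ∧ (l * B).im = 0 := by
  rcases eq_or_ne B 0 with rfl | hB
  · rcases eq_or_ne A 0 with rfl | hA
    · exact ⟨1, by simp⟩
    · exact ⟨I * conj A, by simp [hA], by simp [mul_assoc, ← normSq_eq_conj_mul_self], by simp⟩
  · exact ⟨conj B, by simpa using hB, by rwa [mul_comm], by simp [← normSq_eq_conj_mul_self]⟩

end VanishingPeriod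

section SquareLattice

/-- The square lattice `ℤ + ℤi`, given by its generators `1` and `i`. -/
noncomputable def squarePeriods : PeriodPair where
  ω₁ := 1
  ω₂ := I
  indep := by simpa using basisOneI.linearIndependent

theorem mem_squareLattice {z : ℂ} : z ∈ squarePeriods.lattice ↔ ∃ m n : ℤ, m + n * I = z := by
  simp [PeriodPair.mem_lattice, squarePeriods]

theorem mem_squareLattice_iff_fract {z : ℂ} :
    z ∈ squarePeriods.lattice ↔ Int.fract z.re = 0 ∧ Int.fract z.im = 0 := by
  simp [mem_squareLattice, Int.fract_eq_zero_iff, Complex.ext_iff]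

theorem apply_add_int_add_int_mul_I {α : Type*} {f : ℂ → α} (h₁ : Function.Periodic f 1)
    (hI : Function.Periodic f I) (z : ℂ) (m n : ℤ) : f (z + (m + n * I)) = f z := by
  rw [← add_assoc, hI.int_mul n, ← mul_one (m : ℂ), h₁.int_mul m]

theorem weierstrassP_periodic_one : Function.Periodic squarePeriods.weierstrassP 1 :=
  squarePeriods.periodic_weierstrassP ⟨1, squarePeriods.ω₁_mem_lattice⟩

theorem weierstrassP_periodic_I : Function.Periodic squarePeriods.weierstrassP I :=
  squarePeriods.periodic_weierstrassP ⟨I, squarePeriods.ω₂_mem_lattice⟩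

end SquareLattice

section Legendre

/-- The closed unit square centred at the origin. -/
def unitSquare : Set ℂ := Icc (-(1 / 2)) (1 / 2) ×ℂ Icc (-(1 / 2)) (1 / 2)

/-- The four edges of `∂ unitSquare`, traversed counterclockwise, parametrized by a common
parameter `t ∈ [-1/2, 1/2]`: integrating this over `t` gives the contour integral of `f`. -/
noncomputable def squareBoundary (f : ℂ → ℂ) (t : ℝ) : ℂ :=
  f (t - I / 2) - f (t + I / 2) + I * (f (1 / 2 + t * I) - f (-(1 / 2) + t * I))

theorem intervalIntegrable_edges {f : ℂ → ℂ} (hf : ContinuousOn f (unitSquare \ {0})) :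
    IntervalIntegrable (fun t : ℝ ↦ f (t - I / 2)) volume (-(1 / 2)) (1 / 2) ∧
    IntervalIntegrable (fun t : ℝ ↦ f (t + I / 2)) volume (-(1 / 2)) (1 / 2) ∧
    IntervalIntegrable (fun t : ℝ ↦ f (1 / 2 + t * I)) volume (-(1 / 2)) (1 / 2) ∧
    IntervalIntegrable (fun t : ℝ ↦ f (-(1 / 2) + t * I)) volume (-(1 / 2)) (1 / 2) := by
  have hedge {γ : ℝ → ℂ} (hγ : Continuous γ)
      (hmem : MapsTo γ (Icc (-(1 / 2)) (1 / 2)) (unitSquare \ {0})) :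
      IntervalIntegrable (f ∘ γ) volume (-(1 / 2)) (1 / 2) := by
    rw [← uIcc_of_le (by norm_num)] at hmem
    exact (hf.comp hγ.continuousOn hmem).intervalIntegrable
  refine ⟨hedge (by fun_prop) fun t ht ↦ ?_, hedge (by fun_prop) fun t ht ↦ ?_,
    hedge (by fun_prop) fun t ht ↦ ?_, hedge (by fun_prop) fun t ht ↦ ?_⟩
  all_goals
    have := ht.1
    have := ht.2
    norm_num [unitSquare, mem_reProdIm, Complex.ext_iff]
    grind

theorem intervalIntegrable_squareBoundary {f : ℂ → ℂ} (hf : ContinuousOn f (unitSquare \ {0})) :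
    IntervalIntegrable (squareBoundary f) volume (-(1 / 2)) (1 / 2) := by
  obtain ⟨hbottom, htop, hright, hleft⟩ := intervalIntegrable_edges hf
  exact (hbottom.sub htop).add ((hright.sub hleft).const_mul I)

theorem integral_squareBoundary_eq_zero {f : ℂ → ℂ} (hf : DifferentiableOn ℂ f unitSquare) :
    ∫ t in -(1 / 2)..1 / 2, squareBoundary f t = 0 := by
  obtain ⟨hbottom, htop, hright, hleft⟩ :=
    intervalIntegrable_edges (hf.continuousOn.mono sdiff_subset)
  have hcauchy : (∫ t : ℝ in -(1 / 2)..1 / 2, f (t - I / 2)) -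
      (∫ t : ℝ in -(1 / 2)..1 / 2, f (t + I / 2)) +
      I * (∫ t : ℝ in -(1 / 2)..1 / 2, f (1 / 2 + t * I)) -
      I * (∫ t : ℝ in -(1 / 2)..1 / 2, f (-(1 / 2) + t * I)) = 0 := by
    have h := integral_boundary_rect_eq_zero_of_differentiableOn f
      (-(1 / 2) - I / 2) (1 / 2 + I / 2) (by norm_num; exact hf)
    norm_num at h
    simpa only [sub_eq_add_neg, div_eq_inv_mul, mul_one] using h
  simp only [squareBoundary]
  rw [intervalIntegral.integral_add (hbottom.sub htop) ((hright.sub hleft).const_mul I),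
    intervalIntegral.integral_const_mul, intervalIntegral.integral_sub hbottom htop,
    intervalIntegral.integral_sub hright hleft]
  linear_combination hcauchy

theorem integral_squareBoundary_inv :
    ∫ t in -(1 / 2)..1 / 2, squareBoundary (·⁻¹) t = 2 * Real.pi * I := by
  have hne (t : ℝ) : (t : ℂ) - I / 2 ≠ 0 ∧ (t : ℂ) + I / 2 ≠ 0 := by
    norm_num [Complex.ext_iff]
  have hpoint (t : ℝ) :
      squareBoundary (·⁻¹) t = 2 * I * (((1 / 2) ^ 2 + t ^ 2)⁻¹ : ℝ) := by
    have hright : (1 / 2 + t * I : ℂ) = I * (t - I / 2) := by linear_combination I_sq / 2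
    have hleft : (-(1 / 2) + t * I : ℂ) = I * (t + I / 2) := by linear_combination -I_sq / 2
    have hprod : ((t : ℂ) - I / 2) * (t + I / 2) = (1 / 2) ^ 2 + t ^ 2 := by
      linear_combination -I_sq / 4
    have hcancel (v w : ℂ) : I * ((I * v)⁻¹ - (I * w)⁻¹) = v⁻¹ - w⁻¹ := by
      simp only [mul_inv, mul_sub, mul_inv_cancel_left₀ I_ne_zero]
    simp only [squareBoundary, hright, hleft, hcancel]
    push_cast
    rw [← hprod, inv_sub_inv (hne t).1 (hne t).2]
    ring
  simp only [hpoint]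
  rw [intervalIntegral.integral_const_mul, intervalIntegral.integral_ofReal,
    integral_inv_sq_add_sq (by norm_num)]
  norm_num
  ring

theorem squareBoundary_id_mul {f : ℂ → ℂ} (h₁ : Function.Periodic f 1)
    (hI : Function.Periodic f I) (t : ℝ) :
    squareBoundary (fun z ↦ z * f z) t = I * (f (1 / 2 + t * I) - f (t + I / 2)) := by
  have hbottom : f (t - I / 2) = f (t + I / 2) := by
    rw [← hI (t - I / 2)]; ring_nf
  have hleft : f (-(1 / 2) + t * I) = f (1 / 2 + t * I) := by
    rw [← h₁ (-(1 / 2) + t * I)]; ring_nf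
  simp only [squareBoundary, hbottom, hleft]
  ring

theorem id_mul_weierstrassP (L : PeriodPair) {z : ℂ} (hz : z ≠ 0) :
    z * L.weierstrassP z = z * L.weierstrassPExcept 0 z + z⁻¹ := by
  rw [← L.weierstrassPExcept_add 0 z]
  simp only [ZeroMemClass.coe_zero, sub_zero]
  field_simp
  simp

theorem differentiableOn_weierstrassPExcept_zero_unitSquare :
    DifferentiableOn ℂ (squarePeriods.weierstrassPExcept 0) unitSquare := by
  refine (squarePeriods.differentiableOn_weierstrassPExcept 0).mono fun z hz ↦ ?_
  rintro ⟨hmem, hne⟩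
  obtain ⟨m, n, rfl⟩ := mem_squareLattice.1 hmem
  have hmn : (m : ℝ) ∈ Icc (-(1 / 2)) (1 / 2) ∧ (n : ℝ) ∈ Icc (-(1 / 2)) (1 / 2) := by
    simpa [unitSquare, mem_reProdIm] using hz
  have eq_zero {k : ℤ} (h : -(1 / 2 : ℝ) ≤ k) (h' : (k : ℝ) ≤ 1 / 2) : k = 0 := by
    have : (-1 : ℝ) < k := by linarith
    have : (k : ℝ) < 1 := by linarith
    norm_cast at *
    omega
  exact hne (by simp [eq_zero hmn.1.1 hmn.1.2, eq_zero hmn.2.1 hmn.2.2])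

/-- Legendre's relation: the contour integral of `z * ℘ z` around the square sees only the simple
pole at `0`, while the periods of `℘` reduce it to two edges. -/
theorem integral_weierstrassP_sub_weierstrassP :
    ∫ t : ℝ in -(1 / 2)..1 / 2,
      (squarePeriods.weierstrassP (1 / 2 + t * I) - squarePeriods.weierstrassP (t + I / 2)) =
      2 * Real.pi := by
  set ℘₀ := squarePeriods.weierstrassPExcept 0
  have hreg : DifferentiableOn ℂ (fun z ↦ z * ℘₀ z) unitSquare :=
    differentiableOn_id.mul differentiableOn_weierstrassPExcept_zero_unitSquare
  have hinv : ContinuousOn (fun z : ℂ ↦ z⁻¹) (unitSquare \ {0}) :=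
    continuousOn_id.inv₀ fun z hz ↦ hz.2
  have hsplit {t : ℝ} : squareBoundary (fun z ↦ z * squarePeriods.weierstrassP z) t =
      squareBoundary (fun z ↦ z * ℘₀ z) t + squareBoundary (·⁻¹) t := by
    simp only [squareBoundary]
    rw [id_mul_weierstrassP, id_mul_weierstrassP, id_mul_weierstrassP, id_mul_weierstrassP]
    · ring
    all_goals norm_num [Complex.ext_iff]
  have hcontour : I * ∫ t : ℝ in -(1 / 2)..1 / 2,
      (squarePeriods.weierstrassP (1 / 2 + t * I) - squarePeriods.weierstrassP (t + I / 2)) =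
      2 * Real.pi * I := by
    simp only [← intervalIntegral.integral_const_mul,
      ← squareBoundary_id_mul weierstrassP_periodic_one weierstrassP_periodic_I, hsplit]
    rw [intervalIntegral.integral_add
        (intervalIntegrable_squareBoundary (hreg.continuousOn.mono sdiff_subset))
        (intervalIntegrable_squareBoundary hinv),
      integral_squareBoundary_eq_zero hreg, integral_squareBoundary_inv, zero_add]
  exact mul_left_cancel₀ I_ne_zero (hcontour.trans (mul_comm _ _))

end Legendre

section RePrimitive

theorem exists_hasDerivAt_of_convex {S : Set ℂ} (hS : Convex ℝ S) (hSo : IsOpen S) {f : ℂ → ℂ}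
    (hf : DifferentiableOn ℂ f S) : ∃ F : ℂ → ℂ, ∀ z ∈ S, HasDerivAt F (f z) z := by
  set toForm := (ContinuousLinearMap.toSpanSingletonCLE (𝕜 := ℂ) (E := ℂ)).toContinuousLinearMap
  have hform (z : ℂ) (hz : z ∈ S) : HasFDerivAt (fun w ↦ toForm (f w))
      ((toForm.comp (ContinuousLinearMap.toSpanSingleton ℂ (deriv f z))).restrictScalars ℝ) z :=
    (toForm.hasFDerivAt.comp z
      (hf.differentiableAt (hSo.mem_nhds hz)).hasDerivAt.hasFDerivAt).restrictScalars ℝ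
  obtain ⟨F, hF⟩ := hS.exists_forall_hasFDerivAt_of_fderiv_symmetric (𝕜 := ℂ) hSo
    (fun z hz ↦ (hform z hz).differentiableAt.differentiableWithinAt) fun z hz v w ↦ by
      rw [(hform z hz).fderiv]
      simp [toForm, mul_left_comm]
  exact ⟨F, fun z hz ↦ by simpa [toForm] using (hF z hz).hasDerivAt⟩

theorem sub_eq_sub_of_hasDerivAt {S : Set ℂ} (hSo : IsOpen S) (hS : IsPreconnected S)
    {F G f : ℂ → ℂ} (hF : ∀ z ∈ S, HasDerivAt F (f z) z) (hG : ∀ z ∈ S, HasDerivAt G (f z) z)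
    {z w : ℂ} (hz : z ∈ S) (hw : w ∈ S) : F z - G z = F w - G w := by
  have hderiv (v : ℂ) (hv : v ∈ S) : HasDerivAt (F - G) 0 v := by
    simpa using (hF v hv).sub (hG v hv)
  exact hSo.is_const_of_deriv_eq_zero hS
    (fun v hv ↦ (hderiv v hv).differentiableAt.differentiableWithinAt)
    (fun v hv ↦ (hderiv v hv).deriv) hz hw

theorem primitive_add_eq {S : Set ℂ} (hSo : IsOpen S) (hS : IsPreconnected S) {F f : ℂ → ℂ}
    (hF : ∀ z ∈ S, HasDerivAt F (f z) z) (hf : ContinuousOn f S) {p a : ℂ}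
    (hfp : Function.Periodic f p) (hSp : ∀ z ∈ S, z + p ∈ S) (ha : ∀ t : ℝ, a + t * p ∈ S)
    {z : ℂ} (hz : z ∈ S) : F (z + p) = F z + p * ∫ t in -(1 / 2)..1 / 2, f (a + t * p) := by
  have hline (t : ℝ) :
      HasDerivAt (fun t : ℝ ↦ F (a + t * p)) (p * f (a + t * p)) t := by
    have hγ : HasDerivAt (fun t : ℝ ↦ a + t * p) p t := by
      simpa using ((hasDerivAt_id t).ofReal_comp.mul_const p).const_add a
    simpa only [Function.comp_def, mul_comm] using (hF _ (ha t)).comp t hγ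
  have hcont : Continuous fun t : ℝ ↦ p * f (a + t * p) :=
    continuous_const.mul (hf.comp_continuous (by fun_prop) ha)
  have hftc := intervalIntegral.integral_eq_sub_of_hasDerivAt (fun t _ ↦ hline t)
    (hcont.intervalIntegrable (-(1 / 2)) (1 / 2))
  rw [intervalIntegral.integral_const_mul] at hftc
  have hconst := sub_eq_sub_of_hasDerivAt hSo hS (F := fun z ↦ F (z + p))
    (fun v hv ↦ by simpa only [hfp v] using (hF _ (hSp v hv)).comp_add_const v p) hF
    hz (ha (-(1 / 2)))
  have hend : a + ((-(1 / 2) : ℝ) : ℂ) * p + p = a + ((1 / 2 : ℝ) : ℂ) * p := by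
    push_cast; ring
  simp only [hend] at hconst
  linear_combination hconst - hftc

theorem isOpen_fract_ne_zero {X : Type*} [TopologicalSpace X] {ℓ : X → ℝ} (hℓ : Continuous ℓ) :
    IsOpen {z | Int.fract (ℓ z) ≠ 0} := by
  have hclosed : IsClosed (range ((↑) : ℤ → ℝ)) := Int.isClosedEmbedding_coe_real.isClosed_range
  convert (hclosed.preimage hℓ).isOpen_compl using 1
  ext z
  simp [Int.fract_eq_zero_iff]

theorem exists_re_periodic_primitive_slab {ℓ : ℂ →L[ℝ] ℝ} {p a : ℂ} (hp : ℓ p = 0)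
    (ha : ℓ a ∈ Ioo 0 1) {f : ℂ → ℂ} (hf : DifferentiableOn ℂ f (ℓ ⁻¹' Ioo 0 1))
    (hfp : Function.Periodic f p) (hint : (p * ∫ t in -(1 / 2)..1 / 2, f (a + t * p)).re = 0) :
    ∃ F : ℂ → ℂ, ∀ z, ℓ z ∈ Ioo 0 1 → HasDerivAt F (f z) z ∧ (F (z + p)).re = (F z).re := by
  have hopen : IsOpen (ℓ ⁻¹' Ioo 0 1) := isOpen_Ioo.preimage ℓ.continuous
  have hconvex : Convex ℝ (ℓ ⁻¹' Ioo 0 1) := (convex_Ioo 0 1).linear_preimage ℓ.toLinearMap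
  obtain ⟨F, hF⟩ := exists_hasDerivAt_of_convex hconvex hopen hf
  refine ⟨F, fun z hz ↦ ⟨hF z hz, ?_⟩⟩
  rw [primitive_add_eq hopen hconvex.isPreconnected hF hf.continuousOn hfp
    (fun v hv ↦ by simpa only [mem_preimage, map_add, hp, add_zero] using hv)
    (fun t ↦ by simpa [← real_smul, hp] using ha) hz, add_re, hint, add_zero]

theorem exists_re_periodic_primitive_off_lines {ℓ : ℂ →L[ℝ] ℝ} {p q a : ℂ} (hp : ℓ p = 0)
    (hq : ℓ q = 1) (ha : ℓ a ∈ Ioo 0 1) {f : ℂ → ℂ}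
    (hf : DifferentiableOn ℂ f {z | Int.fract (ℓ z) ≠ 0}) (hfp : Function.Periodic f p)
    (hfq : Function.Periodic f q) (hint : (p * ∫ t in -(1 / 2)..1 / 2, f (a + t * p)).re = 0) :
    ∃ Φ : ℂ → ℂ, (∀ z, Int.fract (ℓ z) ≠ 0 → HasDerivAt Φ (f z) z) ∧
      Function.Periodic (fun z ↦ (Φ z).re) p ∧ Function.Periodic (fun z ↦ (Φ z).re) q := by
  obtain ⟨F, hF⟩ := exists_re_periodic_primitive_slab hp ha
    (hf.mono fun z hz ↦ by simpa [Int.fract_eq_self.2 ⟨hz.1.le, hz.2⟩] using hz.1.ne') hfp hint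
  have hℓ (z : ℂ) : ℓ (z - ⌊ℓ z⌋ * q) = Int.fract (ℓ z) := by
    rw [← zsmul_eq_mul, map_sub, map_zsmul, hq, zsmul_one, Int.self_sub_floor]
  have hmem (z : ℂ) (hz : Int.fract (ℓ z) ≠ 0) : ℓ (z - ⌊ℓ z⌋ * q) ∈ Ioo 0 1 :=
    hℓ z ▸ ⟨(Int.fract_nonneg _).lt_of_ne' hz, Int.fract_lt_one _⟩
  refine ⟨fun z ↦ if Int.fract (ℓ z) = 0 then 0 else F (z - ⌊ℓ z⌋ * q), fun z hz ↦ ?_,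
    fun z ↦ ?_, fun z ↦ ?_⟩
  · have hderiv := (hF _ (hmem z hz)).1.comp_sub_const z (⌊ℓ z⌋ * q)
    rw [hfq.sub_int_mul_eq] at hderiv
    have hfloor : ∀ᶠ w in 𝓝 z, ℓ w ∈ Ioo (⌊ℓ z⌋ : ℝ) (⌊ℓ z⌋ + 1) :=
      ℓ.continuous.continuousAt.eventually_mem (Ioo_mem_nhds
        ((Int.floor_le _).lt_of_ne fun h ↦ hz (by rw [← h, Int.fract_intCast]))
        (Int.lt_floor_add_one _))
    refine hderiv.congr_of_eventuallyEq ?_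
    filter_upwards [hfloor, (isOpen_fract_ne_zero ℓ.continuous).mem_nhds hz] with w hw hw'
    rw [if_neg hw', Int.floor_eq_iff.2 ⟨hw.1.le, hw.2⟩]
  · have hℓp : ℓ (z + p) = ℓ z := by rw [map_add, hp, add_zero]
    simp only [hℓp]
    split_ifs with hz
    · rfl
    · rw [add_sub_right_comm, (hF _ (hmem z hz)).2]
  · have hshift : z + q - (⌊ℓ z⌋ + 1 : ℤ) * q = z - ⌊ℓ z⌋ * q := by push_cast; ring
    simp only [map_add, hq, Int.floor_add_one, Int.fract_add_one, hshift]

/-- `T` agrees near `z` with the real part of a primitive of `f`. For holomorphic `f` this says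
that `T` is harmonic near `z` with gradient `conj f`, under the identification `ℂ = ℝ²`. -/
def IsRePrimitiveAt (f : ℂ → ℂ) (T : ℂ → ℝ) (z : ℂ) : Prop :=
  ∃ F : ℂ → ℂ, ∀ᶠ w in 𝓝 z, HasDerivAt F (f w) w ∧ T w = (F w).re

theorem IsRePrimitiveAt.exists_analyticAt {f : ℂ → ℂ} {T : ℂ → ℝ} {z : ℂ}
    (h : IsRePrimitiveAt f T z) :
    ∃ F : ℂ → ℂ, AnalyticAt ℂ F z ∧ ∀ᶠ w in 𝓝 z, HasDerivAt F (f w) w ∧ T w = (F w).re := by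
  obtain ⟨F, hF⟩ := h
  exact ⟨F, analyticAt_iff_eventually_differentiableAt.2
    (hF.mono fun w hw ↦ hw.1.differentiableAt), hF⟩

theorem IsRePrimitiveAt.congr {f g : ℂ → ℂ} {T θ : ℂ → ℝ} {z : ℂ} (h : IsRePrimitiveAt f T z)
    (hfg : f =ᶠ[𝓝 z] g) (hTθ : T =ᶠ[𝓝 z] θ) : IsRePrimitiveAt g θ z := by
  obtain ⟨F, hF⟩ := h
  refine ⟨F, ?_⟩
  filter_upwards [hF, hfg, hTθ] with w hw hfw hTw
  rwa [← hfw, ← hTw]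

theorem re_sub_re_eq_of_off_lines {f Φ Ψ : ℂ → ℂ}
    (hΦ : ∀ z, Int.fract z.re ≠ 0 → HasDerivAt Φ (f z) z)
    (hΨ : ∀ z, Int.fract z.im ≠ 0 → HasDerivAt Ψ (f z) z)
    (hΦ₁ : Function.Periodic (fun z ↦ (Φ z).re) 1) (hΦI : Function.Periodic (fun z ↦ (Φ z).re) I)
    (hΨ₁ : Function.Periodic (fun z ↦ (Ψ z).re) 1) (hΨI : Function.Periodic (fun z ↦ (Ψ z).re) I) :
    ∃ κ : ℝ, ∀ z, Int.fract z.re ≠ 0 → Int.fract z.im ≠ 0 → (Φ z).re = (Ψ z).re + κ := by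
  set Q : Set ℂ := Ioo 0 1 ×ℂ Ioo 0 1
  have hQ_open : IsOpen Q := isOpen_Ioo.reProdIm isOpen_Ioo
  have hQ_conv : Convex ℝ Q := ((convex_Ioo 0 1).linear_preimage reLm).inter
    ((convex_Ioo 0 1).linear_preimage imLm)
  have fract_ne {t : ℝ} (ht : t ∈ Ioo 0 1) : Int.fract t ≠ 0 := by
    rw [Int.fract_eq_self.2 ⟨ht.1.le, ht.2⟩]
    exact ht.1.ne'
  have hconst {z w : ℂ} (hz : z ∈ Q) (hw : w ∈ Q) : Φ z - Ψ z = Φ w - Ψ w :=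
    sub_eq_sub_of_hasDerivAt hQ_open hQ_conv.isPreconnected
      (fun v hv ↦ hΦ v (fract_ne hv.1)) (fun v hv ↦ hΨ v (fract_ne hv.2)) hz hw
  set z₀ : ℂ := 1 / 2 + I / 2
  have hz₀ : z₀ ∈ Q := by norm_num [Q, z₀, mem_reProdIm]
  refine ⟨(Φ z₀ - Ψ z₀).re, fun z hre him ↦ ?_⟩
  set w : ℂ := Int.fract z.re + Int.fract z.im * I
  have hw : w ∈ Q := by
    simp [Q, w, mem_reProdIm, Int.fract_lt_one, (Int.fract_nonneg _).lt_of_ne', hre, him]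
  have hz : z = w + (⌊z.re⌋ + ⌊z.im⌋ * I) := by
    simp [w, Complex.ext_iff]
  have hΦz : (Φ z).re = (Φ w).re := hz ▸ apply_add_int_add_int_mul_I hΦ₁ hΦI w _ _
  have hΨz : (Ψ z).re = (Ψ w).re := hz ▸ apply_add_int_add_int_mul_I hΨ₁ hΨI w _ _
  rw [hΦz, hΨz, ← hconst hw hz₀, sub_re]
  ring

theorem exists_periodic_isRePrimitiveAt {f : ℂ → ℂ}
    (hf : DifferentiableOn ℂ f (squarePeriods.lattice : Set ℂ)ᶜ) (hf₁ : Function.Periodic f 1)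
    (hfI : Function.Periodic f I) (hH : (∫ t : ℝ in -(1 / 2)..1 / 2, f (t + I / 2)).re = 0)
    (hV : (∫ t : ℝ in -(1 / 2)..1 / 2, f (1 / 2 + t * I)).im = 0) :
    ∃ T : ℂ → ℝ, Function.Periodic T 1 ∧ Function.Periodic T I ∧
      ∀ z ∉ squarePeriods.lattice, IsRePrimitiveAt f T z := by
  obtain ⟨Φ, hΦ, hΦI, hΦ₁⟩ := exists_re_periodic_primitive_off_lines
    (ℓ := reCLM) (p := I) (q := 1) (a := 1 / 2) (f := f) (by simp) (by simp) (by norm_num)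
    (hf.mono fun z hz hmem ↦ hz (mem_squareLattice_iff_fract.1 hmem).1) hfI hf₁ (by simpa using hV)
  obtain ⟨Ψ, hΨ, hΨ₁, hΨI⟩ := exists_re_periodic_primitive_off_lines
    (ℓ := imCLM) (p := 1) (q := I) (a := I / 2) (f := f) (by simp) (by simp) (by norm_num)
    (hf.mono fun z hz hmem ↦ hz (mem_squareLattice_iff_fract.1 hmem).2) hf₁ hfI
    (by simpa [add_comm] using hH)
  simp only [reCLM_apply, imCLM_apply] at hΦ hΨ
  obtain ⟨κ, hκ⟩ := re_sub_re_eq_of_off_lines hΦ hΨ hΦ₁ hΦI hΨ₁ hΨI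
  refine ⟨fun z ↦ if Int.fract z.re = 0 then (Ψ z).re + κ else (Φ z).re, fun z ↦ ?_, fun z ↦ ?_,
    fun z hz ↦ ?_⟩
  · simpa using if_congr Iff.rfl (congrArg (· + κ) (hΨ₁ z)) (hΦ₁ z)
  · simpa using if_congr Iff.rfl (congrArg (· + κ) (hΨI z)) (hΦI z)
  by_cases hre : Int.fract z.re = 0
  · have him : Int.fract z.im ≠ 0 := fun him ↦ hz (mem_squareLattice_iff_fract.2 ⟨hre, him⟩)
    refine ⟨fun w ↦ Ψ w + κ, ?_⟩
    filter_upwards [(isOpen_fract_ne_zero continuous_im).mem_nhds him] with w hw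
    refine ⟨(hΨ w hw).add_const _, ?_⟩
    split_ifs with h
    · simp
    · simp [hκ w h hw]
  · refine ⟨Φ, ?_⟩
    filter_upwards [(isOpen_fract_ne_zero continuous_re).mem_nhds hre] with w hw
    exact ⟨hΦ w hw, if_neg hw⟩

end RePrimitive

section Cutoff

theorem four_mul_sq_sub_round_le_sin_sq (t : ℝ) :
    4 * (t - round t) ^ 2 ≤ Real.sin (Real.pi * t) ^ 2 := by
  set d := t - round t
  have hsin : Real.sin (Real.pi * t) ^ 2 = Real.sin (Real.pi * d) ^ 2 := by
    rw [mul_sub, mul_comm Real.pi (round t : ℝ), Real.sin_sub_int_mul_pi, mul_pow,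
      ← sq_abs ((-1) ^ round t), abs_zpow, abs_neg, abs_one, one_zpow, one_pow, one_mul]
  have hd : |Real.pi * d| ≤ Real.pi / 2 := by
    rw [abs_mul, abs_of_pos Real.pi_pos]
    linarith [mul_le_mul_of_nonneg_left (abs_sub_round t) Real.pi_pos.le]
  have hjordan : 2 * |d| ≤ |Real.sin (Real.pi * d)| := by
    convert Real.mul_abs_le_abs_sin hd using 1
    rw [abs_mul, abs_of_pos Real.pi_pos]
    field_simp
  calc 4 * d ^ 2 = (2 * |d|) ^ 2 := by rw [mul_pow, sq_abs]; norm_num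
    _ ≤ |Real.sin (Real.pi * d)| ^ 2 := by gcongr
    _ = Real.sin (Real.pi * t) ^ 2 := by rw [sq_abs, hsin]

/-- A smooth periodic function that is comparable to the squared distance to the square lattice,
used to cut off near the lattice points. -/
noncomputable def sineGauge (z : ℂ) : ℝ :=
  Real.sin (Real.pi * z.re) ^ 2 + Real.sin (Real.pi * z.im) ^ 2

theorem contDiff_sineGauge {n : WithTop ℕ∞} : ContDiff ℝ n sineGauge := by
  have hre : ContDiff ℝ n fun z : ℂ ↦ z.re := reCLM.contDiff
  have him : ContDiff ℝ n fun z : ℂ ↦ z.im := imCLM.contDiff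
  unfold sineGauge
  fun_prop

theorem sineGauge_periodic_one : Function.Periodic sineGauge 1 := fun z ↦ by
  simp [sineGauge, mul_add, Real.sin_add_pi]

theorem sineGauge_periodic_I : Function.Periodic sineGauge I := fun z ↦ by
  simp [sineGauge, mul_add, Real.sin_add_pi]

theorem sineGauge_eq_zero {z : ℂ} (hz : z ∈ squarePeriods.lattice) : sineGauge z = 0 := by
  obtain ⟨m, n, rfl⟩ := mem_squareLattice.1 hz
  simp [sineGauge, mul_comm Real.pi, Real.sin_int_mul_pi]

theorem four_mul_sq_le_sineGauge {z : ℂ} {r : ℝ} (hr : 0 ≤ r)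
    (hz : ∀ v ∈ squarePeriods.lattice, r ≤ ‖z - v‖) : 4 * r ^ 2 ≤ sineGauge z := by
  set v : ℂ := round z.re + round z.im * I
  have hdist : ‖z - v‖ ^ 2 = (z.re - round z.re) ^ 2 + (z.im - round z.im) ^ 2 := by
    rw [Complex.sq_norm, normSq_apply]
    simp [v, sq]
  have hle : r ^ 2 ≤ ‖z - v‖ ^ 2 := by
    gcongr
    exact hz v (mem_squareLattice.2 ⟨_, _, rfl⟩)
  rw [sineGauge]
  linarith [four_mul_sq_sub_round_le_sin_sq z.re, four_mul_sq_sub_round_le_sin_sq z.im]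

theorem exists_periodic_cutoff {r : ℝ} (hr : 0 < r) :
    ∃ χ : ℂ → ℝ, ContDiff ℝ ∞ χ ∧ Function.Periodic χ 1 ∧ Function.Periodic χ I ∧
      (∀ z ∈ squarePeriods.lattice, χ =ᶠ[𝓝 z] 0) ∧
      ∀ z, (∀ v ∈ squarePeriods.lattice, r ≤ ‖z - v‖) → χ =ᶠ[𝓝 z] 1 := by
  have hgauge (z : ℂ) : Tendsto sineGauge (𝓝 z) (𝓝 (sineGauge z)) :=
    (contDiff_sineGauge (n := 0)).continuous.continuousAt
  refine ⟨fun z ↦ Real.smoothTransition (sineGauge z / r ^ 2 - 1), ?_, fun z ↦ ?_, fun z ↦ ?_,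
    fun z hz ↦ ?_, fun z hz ↦ ?_⟩
  · exact Real.smoothTransition.contDiff.comp ((contDiff_sineGauge.div_const _).sub contDiff_const)
  · simp only [sineGauge_periodic_one z]
  · simp only [sineGauge_periodic_I z]
  · filter_upwards [(hgauge z).eventually_le_const (u := r ^ 2)
      (by rw [sineGauge_eq_zero hz]; positivity)] with w hw
    refine Real.smoothTransition.zero_of_nonpos ?_
    rwa [sub_nonpos, div_le_one (by positivity)]
  · filter_upwards [(hgauge z).eventually_const_le (u := 2 * r ^ 2)
      (by nlinarith [four_mul_sq_le_sineGauge hr.le hz])] with w hw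
    refine Real.smoothTransition.one_of_one_le ?_
    rw [le_sub_iff_add_le, le_div_iff₀ (by positivity)]
    linarith

theorem contDiff_smul_of_eventuallyEq_zero {E F : Type*} [NormedAddCommGroup E] [NormedSpace ℝ E]
    [NormedAddCommGroup F] [NormedSpace ℝ F] {n : WithTop ℕ∞} {χ : E → ℝ} {g : E → F}
    (hχ : ContDiff ℝ n χ) (h : ∀ x, χ =ᶠ[𝓝 x] 0 ∨ ContDiffAt ℝ n g x) :
    ContDiff ℝ n fun x ↦ χ x • g x := by
  refine contDiff_iff_contDiffAt.2 fun x ↦ ?_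
  rcases h x with hzero | hg
  · refine contDiffAt_const (c := (0 : F)) |>.congr_of_eventuallyEq ?_
    filter_upwards [hzero] with y hy
    rw [hy, Pi.zero_apply, zero_smul]
  · exact hχ.contDiffAt.smul hg

end Cutoff

section Torus

theorem IsRePrimitiveAt.contDiffAt {f : ℂ → ℂ} {T : ℂ → ℝ} {z : ℂ} {n : WithTop ℕ∞}
    (h : IsRePrimitiveAt f T z) : ContDiffAt ℝ n T z := by
  obtain ⟨F, hF_analytic, hF⟩ := h.exists_analyticAt
  exact (reCLM.contDiff.contDiffAt.comp z
    (hF_analytic.contDiffAt.restrict_scalars ℝ)).congr_of_eventuallyEq (hF.mono fun w hw ↦ hw.2)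

theorem exists_exp_weierstrassP_periods :
    ∃ c l : ℂ, l ≠ 0 ∧
      (∫ t : ℝ in -(1 / 2)..1 / 2, l * exp (c * squarePeriods.weierstrassP (t + I / 2))).re = 0 ∧
      (∫ t : ℝ in -(1 / 2)..1 / 2,
        l * exp (c * squarePeriods.weierstrassP (1 / 2 + t * I))).im = 0 := by
  have hcont {γ : ℝ → ℂ} (hγ : Continuous γ) (hmem : ∀ t, γ t ∉ squarePeriods.lattice) :
      Continuous fun t ↦ squarePeriods.weierstrassP (γ t) :=
    squarePeriods.differentiableOn_weierstrassP.continuousOn.comp_continuous hγ hmem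
  have hhalf : Int.fract (1 / 2 : ℝ) ≠ 0 := by norm_num [Int.fract]
  have hH : Continuous fun t : ℝ ↦ squarePeriods.weierstrassP (t + I / 2) :=
    hcont (by fun_prop) fun t ht ↦ hhalf (by simpa using (mem_squareLattice_iff_fract.1 ht).2)
  have hV : Continuous fun t : ℝ ↦ squarePeriods.weierstrassP (1 / 2 + t * I) :=
    hcont (by fun_prop) fun t ht ↦ hhalf (by simpa using (mem_squareLattice_iff_fract.1 ht).1)
  have hne : (∫ t : ℝ in -(1 / 2)..1 / 2, squarePeriods.weierstrassP (t + I / 2)) ≠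
      ∫ t : ℝ in -(1 / 2)..1 / 2, squarePeriods.weierstrassP (1 / 2 + t * I) := fun h ↦ by
    have hlegendre := integral_weierstrassP_sub_weierstrassP
    rw [intervalIntegral.integral_sub (hV.intervalIntegrable _ _) (hH.intervalIntegrable _ _), h,
      sub_self] at hlegendre
    exact (by simp [Real.pi_ne_zero] : (2 * Real.pi : ℂ) ≠ 0) hlegendre.symm
  obtain ⟨c, hc⟩ := exists_re_integral_exp_mul_conj_eq_zero hH hV hne
  obtain ⟨l, hl, hlH, hlV⟩ := exists_ne_zero_re_mul_eq_zero_im_mul_eq_zero hc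
  exact ⟨c, l, hl, by rwa [intervalIntegral.integral_const_mul],
    by rwa [intervalIntegral.integral_const_mul]⟩

theorem exists_smooth_rePrimitive_of_nonvanishing {r : ℝ} (hr : 0 < r) :
    ∃ (θ : ℂ → ℝ) (w : ℂ → ℂ), (Function.Periodic θ 1 ∧ Function.Periodic θ I) ∧
      (Function.Periodic w 1 ∧ Function.Periodic w I) ∧ ContDiff ℝ ∞ θ ∧ ContDiff ℝ ∞ w ∧
      (∀ z, w z ≠ 0) ∧
      ∀ z, (∀ v ∈ squarePeriods.lattice, r ≤ ‖z - v‖) → IsRePrimitiveAt w θ z := by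
  set ℘ := squarePeriods.weierstrassP
  obtain ⟨c, l, hl, hH, hV⟩ := exists_exp_weierstrassP_periods
  have h℘ (z : ℂ) (hz : z ∉ squarePeriods.lattice) : AnalyticAt ℂ ℘ z :=
    squarePeriods.analyticOnNhd_weierstrassP z hz
  obtain ⟨T, hT₁, hTI, hT⟩ := exists_periodic_isRePrimitiveAt (f := fun z ↦ l * exp (c * ℘ z))
    (fun z hz ↦ (((h℘ z hz).differentiableAt.const_mul c).cexp.const_mul l).differentiableWithinAt)
    (fun z ↦ by simp only [℘, weierstrassP_periodic_one z])
    (fun z ↦ by simp only [℘, weierstrassP_periodic_I z]) hH hV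
  obtain ⟨χ, hχ, hχ₁, hχI, hχ_zero, hχ_one⟩ := exists_periodic_cutoff hr
  have hχ℘ : ContDiff ℝ ∞ fun z ↦ χ z • ℘ z := contDiff_smul_of_eventuallyEq_zero hχ fun z ↦
    or_iff_not_imp_left.2 fun hz ↦ ((h℘ z (mt (hχ_zero z) hz)).contDiffAt).restrict_scalars ℝ
  have hχT : ContDiff ℝ ∞ fun z ↦ χ z • T z := contDiff_smul_of_eventuallyEq_zero hχ fun z ↦
    or_iff_not_imp_left.2 fun hz ↦ (hT z (mt (hχ_zero z) hz)).contDiffAt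
  refine ⟨fun z ↦ χ z • T z, fun z ↦ l * exp (c * χ z • ℘ z), ⟨fun z ↦ ?_, fun z ↦ ?_⟩,
    ⟨fun z ↦ ?_, fun z ↦ ?_⟩, hχT, contDiff_const.mul (contDiff_const.mul hχ℘).cexp,
    fun z ↦ mul_ne_zero hl (exp_ne_zero _), fun z hz ↦ ?_⟩
  · simp only [hχ₁ z, hT₁ z]
  · simp only [hχI z, hTI z]
  · simp only [℘, hχ₁ z, weierstrassP_periodic_one z]
  · simp only [℘, hχI z, weierstrassP_periodic_I z]
  · have hz_not_mem : z ∉ squarePeriods.lattice := fun hmem ↦ by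
      simpa using hr.trans_le (hz z hmem)
    refine (hT z hz_not_mem).congr ?_ ?_ <;>
      filter_upwards [hχ_one z hz] with u hu <;>
      simp [hu]

end Torus

section PlanarCoordinates

/-- The complex coordinate on the plane centred at `x₀`. -/
noncomputable def complexCoord (x₀ x : ℝ × ℝ) : ℂ := equivRealProdCLM.symm (x - x₀)

theorem contDiff_complexCoord (x₀ : ℝ × ℝ) {n : WithTop ℕ∞} : ContDiff ℝ n (complexCoord x₀) :=
  equivRealProdCLM.symm.contDiff.comp (contDiff_id.sub contDiff_const)

theorem hasDerivAt_complexCoord_fst (x₀ : ℝ × ℝ) (a b : ℝ) :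
    HasDerivAt (fun u ↦ complexCoord x₀ (u, b)) 1 a := by
  simpa [complexCoord, Function.comp_def, equivRealProdCLM_symm_apply] using
    ((hasDerivAt_id a).ofReal_comp.sub_const (x₀.1 : ℂ)).add_const ((b - x₀.2) * I)

theorem hasDerivAt_complexCoord_snd (x₀ : ℝ × ℝ) (a b : ℝ) :
    HasDerivAt (fun u ↦ complexCoord x₀ (a, u)) I b := by
  simpa [complexCoord, Function.comp_def, equivRealProdCLM_symm_apply] using
    (((hasDerivAt_id b).ofReal_comp.sub_const (x₀.2 : ℂ)).mul_const I).const_add (a - x₀.1 : ℂ)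

theorem complexCoord_add_int (x₀ x : ℝ × ℝ) (k l : ℤ) :
    complexCoord x₀ (x.1 + k, x.2 + l) = complexCoord x₀ x + (k + l * I) := by
  simp [complexCoord, Complex.ext_iff, add_sub_right_comm]

theorem apply_complexCoord_add_int {α : Type*} {f : ℂ → α} (h₁ : Function.Periodic f 1)
    (hI : Function.Periodic f I) (x₀ x : ℝ × ℝ) (k l : ℤ) :
    f (complexCoord x₀ (x.1 + k, x.2 + l)) = f (complexCoord x₀ x) := by
  rw [complexCoord_add_int, apply_add_int_add_int_mul_I h₁ hI]

theorem exists_forall_le_norm_complexCoord_sub {U : Set (ℝ × ℝ)} (hU : U ∈ 𝓝 0) :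
    ∃ r > 0, ∀ x₀ x : ℝ × ℝ, (∀ k l : ℤ, (x.1 - x₀.1 - k, x.2 - x₀.2 - l) ∉ U) →
      ∀ v ∈ squarePeriods.lattice, r ≤ ‖complexCoord x₀ x - v‖ := by
  obtain ⟨r, hr, hball⟩ := Metric.mem_nhds_iff.1
    (equivRealProdCLM.continuous.continuousAt.preimage_mem_nhds (by rwa [map_zero]))
  refine ⟨r, hr, fun x₀ x hx v hv ↦ ?_⟩
  obtain ⟨k, l, rfl⟩ := mem_squareLattice.1 hv
  by_contra! hlt
  have hpoint : equivRealProdCLM (complexCoord x₀ x - (k + l * I)) =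
      (x.1 - x₀.1 - k, x.2 - x₀.2 - l) := by
    ext <;> simp [complexCoord]
  exact hx k l (hpoint ▸ hball (mem_ball_zero_iff.2 hlt))

theorem nrm2_lt_mem_nhds {r : ℝ} (hr : 0 < r) : {v | nrm2 v < r} ∈ 𝓝 0 := by
  have hcont : Continuous nrm2 := by
    unfold nrm2
    fun_prop
  exact (isOpen_lt hcont continuous_const).mem_nhds (by simpa [nrm2] using hr)

namespace IsRePrimitiveAt

variable {f : ℂ → ℂ} {T : ℂ → ℝ}

theorem hasDerivAt_comp {γ : ℝ → ℂ} {γ' : ℂ} {t : ℝ} (h : IsRePrimitiveAt f T (γ t))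
    (hγ : HasDerivAt γ γ' t) : HasDerivAt (fun u ↦ T (γ u)) (f (γ t) * γ').re t := by
  obtain ⟨F, hF⟩ := h
  have hderiv : HasDerivAt (fun u ↦ (F (γ u)).re) (f (γ t) * γ').re t :=
    reCLM.hasFDerivAt.comp_hasDerivAt t (hF.self_of_nhds.1.comp t hγ)
  exact hderiv.congr_of_eventuallyEq (hγ.continuousAt.eventually (hF.mono fun w hw ↦ hw.2))

theorem differentiableAt {z : ℂ} (h : IsRePrimitiveAt f T z) : DifferentiableAt ℂ f z := by
  obtain ⟨F, hF_analytic, hF⟩ := h.exists_analyticAt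
  exact hF_analytic.deriv.differentiableAt.congr_of_eventuallyEq
    (hF.mono fun w hw ↦ hw.1.deriv.symm)

theorem eventually {z : ℂ} (h : IsRePrimitiveAt f T z) : ∀ᶠ w in 𝓝 z, IsRePrimitiveAt f T w := by
  obtain ⟨F, hF⟩ := h
  exact hF.eventually_nhds.mono fun w hw ↦ ⟨F, hw⟩

theorem hasDerivAt_fst {x₀ : ℝ × ℝ} {a b : ℝ}
    (h : IsRePrimitiveAt f T (complexCoord x₀ (a, b))) :
    HasDerivAt (fun u ↦ T (complexCoord x₀ (u, b))) (f (complexCoord x₀ (a, b))).re a := by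
  simpa only [mul_one] using
    h.hasDerivAt_comp (γ := fun u ↦ complexCoord x₀ (u, b)) (hasDerivAt_complexCoord_fst x₀ a b)

theorem hasDerivAt_snd {x₀ : ℝ × ℝ} {a b : ℝ}
    (h : IsRePrimitiveAt f T (complexCoord x₀ (a, b))) :
    HasDerivAt (fun u ↦ T (complexCoord x₀ (a, u))) (-(f (complexCoord x₀ (a, b))).im) b := by
  simpa only [mul_I_re] using
    h.hasDerivAt_comp (γ := fun u ↦ complexCoord x₀ (a, u)) (hasDerivAt_complexCoord_snd x₀ a b)

theorem grad2_comp_complexCoord {x₀ x : ℝ × ℝ} (h : IsRePrimitiveAt f T (complexCoord x₀ x)) :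
    grad2 (T ∘ complexCoord x₀) x = equivRealProdCLM (conj (f (complexCoord x₀ x))) :=
  Prod.ext h.hasDerivAt_fst.deriv h.hasDerivAt_snd.deriv

theorem lap2_comp_complexCoord {x₀ x : ℝ × ℝ} (h : IsRePrimitiveAt f T (complexCoord x₀ x)) :
    lap2 (T ∘ complexCoord x₀) x = 0 := by
  have hγ₁ := hasDerivAt_complexCoord_fst x₀ x.1 x.2
  have hγ₂ := hasDerivAt_complexCoord_snd x₀ x.1 x.2
  have hfst : (fun u ↦ deriv (fun u' ↦ T (complexCoord x₀ (u', x.2))) u) =ᶠ[𝓝 x.1]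
      fun u ↦ (f (complexCoord x₀ (u, x.2))).re :=
    (hγ₁.continuousAt.eventually h.eventually).mono fun u hu ↦ hu.hasDerivAt_fst.deriv
  have hsnd : (fun u ↦ deriv (fun u' ↦ T (complexCoord x₀ (x.1, u'))) u) =ᶠ[𝓝 x.2]
      fun u ↦ -(f (complexCoord x₀ (x.1, u))).im :=
    (hγ₂.continuousAt.eventually h.eventually).mono fun u hu ↦ hu.hasDerivAt_snd.deriv
  have hf := h.differentiableAt.hasDerivAt
  set f' := deriv f (complexCoord x₀ x)
  have hre : HasDerivAt (fun u ↦ (f (complexCoord x₀ (u, x.2))).re) (f' * 1).re x.1 :=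
    reCLM.hasFDerivAt.comp_hasDerivAt x.1 (hf.comp x.1 hγ₁)
  have him : HasDerivAt (fun u ↦ (f (complexCoord x₀ (x.1, u))).im) (f' * I).im x.2 :=
    imCLM.hasFDerivAt.comp_hasDerivAt x.2 (hf.comp x.2 hγ₂)
  calc lap2 (T ∘ complexCoord x₀) x = (f' * 1).re + -(f' * I).im :=
        congrArg₂ (· + ·) (hfst.deriv_eq.trans hre.deriv) (hsnd.deriv_eq.trans him.neg.deriv)
    _ = 0 := by rw [mul_one, mul_I_im, add_neg_cancel]

end IsRePrimitiveAt

end PlanarCoordinates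

theorem statement11_general (x₀ : ℝ × ℝ) {U : Set (ℝ × ℝ)} (hU : U ∈ 𝓝 0) :
    ∃ θ : ℝ × ℝ → ℝ, ∃ W : ℝ × ℝ → ℝ × ℝ,
      (∀ x : ℝ × ℝ, ∀ k l : ℤ, θ (x.1 + k, x.2 + l) = θ x) ∧
      ContDiff ℝ ∞ θ ∧
      (∀ x, (∀ k l : ℤ, (x.1 - x₀.1 - k, x.2 - x₀.2 - l) ∉ U) → lap2 θ x = 0) ∧
      (∀ x, (∀ k l : ℤ, (x.1 - x₀.1 - k, x.2 - x₀.2 - l) ∉ U) → grad2 θ x ≠ 0) ∧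
      (∀ x : ℝ × ℝ, ∀ k l : ℤ, W (x.1 + k, x.2 + l) = W x) ∧
      ContDiff ℝ ∞ W ∧
      (∀ x, W x ≠ 0) ∧
      (∀ x, (∀ k l : ℤ, (x.1 - x₀.1 - k, x.2 - x₀.2 - l) ∉ U) → W x = grad2 θ x) := by
  obtain ⟨r, hr, hfar⟩ := exists_forall_le_norm_complexCoord_sub hU
  obtain ⟨θ, w, ⟨hθ₁, hθI⟩, ⟨hw₁, hwI⟩, hθ, hw, hw_ne, hprim⟩ :=
    exists_smooth_rePrimitive_of_nonvanishing hr
  set W : ℝ × ℝ → ℝ × ℝ := fun x ↦ equivRealProdCLM (conj (w (complexCoord x₀ x)))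
  have hW_ne (x : ℝ × ℝ) : W x ≠ 0 := by
    simpa only [W, ne_eq, map_eq_zero_iff _ equivRealProdCLM.injective, map_eq_zero] using hw_ne _
  have hgrad (x : ℝ × ℝ) (hx : ∀ k l : ℤ, (x.1 - x₀.1 - k, x.2 - x₀.2 - l) ∉ U) :
      W x = grad2 (θ ∘ complexCoord x₀) x :=
    (hprim _ (hfar x₀ x hx)).grad2_comp_complexCoord.symm
  refine ⟨θ ∘ complexCoord x₀, W, apply_complexCoord_add_int hθ₁ hθI x₀,
    hθ.comp (contDiff_complexCoord x₀),
    fun x hx ↦ (hprim _ (hfar x₀ x hx)).lap2_comp_complexCoord,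
    fun x hx ↦ hgrad x hx ▸ hW_ne x, fun x k l ↦ ?_,
    equivRealProdCLM.contDiff.comp (conjCLE.contDiff.comp (hw.comp (contDiff_complexCoord x₀))),
    hW_ne, hgrad⟩
  simp only [W, apply_complexCoord_add_int hw₁ hwI]

/-- There exists a smooth (`ℤ²`-periodic, i.e. defined on `T²`) function `θ` which is harmonic
with nonvanishing gradient outside `B(x₀,r₀)`, and whose gradient extends from
`T² \ B(x₀,r₀)` to a smooth nonvanishing vector field `W` on all of `T²`
(possible since the index of `∇θ` along `S(x₀,r₀)` is zero). -/
theorem statement11 (x₀ : ℝ × ℝ) (r₀ : ℝ) (hr₀ : 0 < r₀) (hr₀' : r₀ < 1 / 2) :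
    ∃ θ : ℝ × ℝ → ℝ, ∃ W : ℝ × ℝ → ℝ × ℝ,
      (∀ x : ℝ × ℝ, ∀ k l : ℤ, θ (x.1 + k, x.2 + l) = θ x) ∧
      ContDiff ℝ (⊤ : ℕ∞) θ ∧
      (∀ x, outsideBall x₀ r₀ x → lap2 θ x = 0) ∧
      (∀ x, outsideBall x₀ r₀ x → grad2 θ x ≠ 0) ∧
      (∀ x : ℝ × ℝ, ∀ k l : ℤ, W (x.1 + k, x.2 + l) = W x) ∧
      ContDiff ℝ (⊤ : ℕ∞) W ∧
      (∀ x, W x ≠ 0) ∧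
      (∀ x, outsideBall x₀ r₀ x → W x = grad2 θ x) := by
  simpa only [outsideBall, mem_ofPred_eq, not_lt] using
    statement11_general x₀ (nrm2_lt_mem_nhds hr₀)
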